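/- Suppose there exist finitely supported probability distributions U₁(·|x) on 𝒮, one for each x∈𝒳, such that Σ_s U₁(s|x')ρ_{x,y,s} = Σ_s U₁(s|x)ρ_{x',y,s} for all x,x'∈𝒳 and all y∈𝒴. Then every (n,M₁,M₂) deterministic code with M₁ ≥ 2 satisfies sup_{s^n∈𝒮^n} ē(C,s^n) ≥ 1/4. -/

import Mathlib

open scoped ComplexOrder

noncomputable section

/-- A density matrix: positive semidefinite with unit trace. -/
def IsDensity {m : Type*} [Fintype m] (ρ : Matrix m m ℂ) : Prop :=
  ρ.PosSemidef ∧ ρ.trace = 1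

/-- Tensor product of a finite family of matrices, realized on functions. -/
def tensorFam {k d : Type*} [Fintype k] (ρ : k → Matrix d d ℂ) :
    Matrix (k → d) (k → d) ℂ :=
  Matrix.of fun i j => ∏ a, ρ a (i a) (j a)

/-!
The jammer picks a message `j` of the first sender uniformly at random and draws `sⁿ` from the
product distribution `U₁(· | f₁ j)`. By symmetrizability the averaged channel output is unchanged
when the transmitted message `i` and the jammer's message `j` are swapped, so for `i ≠ j` the
receiver is right with total probability at most `1` over the two orders. Hence the success
probability is at most `(1 + 1 / M₁) / 2` on average over `sⁿ`, and so for some fixed `sⁿ`.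
-/

open Convexity (StdSimplex)
open Finsupp (linearCombination linearCombination_apply)

section Measurement

variable {m o : Type*} [Fintype m]

/-- The Born rule: the probability `Tr (E ρ)` that the effect `E` occurs in the state `ρ`, as a
real linear functional of `ρ`. The trace is real for Hermitian arguments; in general the real part
is taken. -/
def outcomeProb (E : Matrix m m ℂ) : Matrix m m ℂ →ₗ[ℝ] ℝ :=
  Complex.reLm ∘ₗ Matrix.traceLinearMap m ℝ ℂ ∘ₗ LinearMap.mulLeft ℝ E

theorem outcomeProb_apply (E ρ : Matrix m m ℂ) : outcomeProb E ρ = (E * ρ).trace.re := rfl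

theorem exists_eq_conjTranspose_mul_self {A : Matrix m m ℂ} (hA : A.PosSemidef) :
    ∃ B : Matrix m m ℂ, A = B.conjTranspose * B := by
  classical
  open scoped MatrixOrder in
  exact CStarAlgebra.nonneg_iff_eq_star_mul_self.mp hA.nonneg

theorem outcomeProb_nonneg {E ρ : Matrix m m ℂ} (hE : E.PosSemidef) (hρ : ρ.PosSemidef) :
    0 ≤ outcomeProb E ρ := by
  obtain ⟨B, rfl⟩ := exists_eq_conjTranspose_mul_self hρ
  have trace_cycle : (E * (B.conjTranspose * B)).trace = (B * E * B.conjTranspose).trace := by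
    rw [← Matrix.mul_assoc, Matrix.trace_mul_comm, Matrix.mul_assoc]
  rw [outcomeProb_apply, trace_cycle]
  exact (Complex.le_def.mp (hE.mul_mul_conjTranspose_same B).trace_nonneg).1

variable [Fintype o] [DecidableEq m]

/-- A positive operator-valued measure with finitely many outcomes. -/
structure IsPOVM (D : o → Matrix m m ℂ) : Prop where
  posSemidef : ∀ p, (D p).PosSemidef
  sum_eq_one : ∑ p, D p = 1

namespace IsPOVM

variable {D : o → Matrix m m ℂ} {ρ : Matrix m m ℂ}

theorem sum_outcomeProb (hD : IsPOVM D) (hρ : IsDensity ρ) : ∑ p, outcomeProb (D p) ρ = 1 := by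
  simp only [outcomeProb_apply]
  rw [← Complex.re_sum, ← Matrix.trace_sum, ← Finset.sum_mul, hD.sum_eq_one, one_mul, hρ.2,
    Complex.one_re]

theorem outcomeProb_le_one (hD : IsPOVM D) (hρ : IsDensity ρ) (p : o) :
    outcomeProb (D p) ρ ≤ 1 :=
  hD.sum_outcomeProb hρ ▸ Finset.single_le_sum
    (fun q _ => outcomeProb_nonneg (hD.posSemidef q) hρ.1) (Finset.mem_univ p)

theorem outcomeProb_add_le_one (hD : IsPOVM D) (hρ : IsDensity ρ) {p q : o} (hpq : p ≠ q) :
    outcomeProb (D p) ρ + outcomeProb (D q) ρ ≤ 1 := by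
  rw [← hD.sum_outcomeProb hρ]
  exact Finset.add_le_sum (f := fun r => outcomeProb (D r) ρ)
    (fun r _ => outcomeProb_nonneg (hD.posSemidef r) hρ.1) (Finset.mem_univ p)
    (Finset.mem_univ q) hpq

end IsPOVM

end Measurement

section AverageError

variable {m o : Type*} [Fintype m] [Fintype o]

/-- The average error of the decoder `D` when each message `p` is equally likely and is received as
the state `σ p`. -/
def averageError (D σ : o → Matrix m m ℂ) : ℝ :=
  1 - 1 / (Fintype.card o : ℝ) * ∑ p, outcomeProb (D p) (σ p)

theorem averageError_le_one {D σ : o → Matrix m m ℂ} (hD : ∀ p, (D p).PosSemidef)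
    (hσ : ∀ p, (σ p).PosSemidef) : averageError D σ ≤ 1 :=
  sub_le_self _ <| mul_nonneg (by positivity) <|
    Finset.sum_nonneg fun p _ => outcomeProb_nonneg (hD p) (hσ p)

theorem one_sub_le_averageError {D σ : o → Matrix m m ℂ} {c : ℝ} (hc : 0 ≤ c)
    (hsum : ∑ p, outcomeProb (D p) (σ p) ≤ c * Fintype.card o) :
    1 - c ≤ averageError D σ := by
  rw [averageError, one_div_mul_eq_div]
  exact sub_le_sub_left (div_le_of_le_mul₀ (Nat.cast_nonneg _) hc hsum) 1

end AverageError

section Tensor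

variable {k d : Type*} [Fintype k]

theorem conjTranspose_tensorFam (A : k → Matrix d d ℂ) :
    (tensorFam A).conjTranspose = tensorFam fun a => (A a).conjTranspose := by
  ext i j
  simp [tensorFam, Matrix.conjTranspose_apply]

theorem tensorFam_mul_tensorFam [DecidableEq k] [Fintype d] (A B : k → Matrix d d ℂ) :
    tensorFam A * tensorFam B = tensorFam fun a => A a * B a := by
  ext i j
  simp only [tensorFam, Matrix.mul_apply, Matrix.of_apply, ← Finset.prod_mul_distrib,
    Finset.prod_univ_sum, Fintype.piFinset_univ]

theorem trace_tensorFam [DecidableEq k] [Fintype d] (A : k → Matrix d d ℂ) :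
    (tensorFam A).trace = ∏ a, (A a).trace := by
  simp only [tensorFam, Matrix.trace, Matrix.diag, Matrix.of_apply, Finset.prod_univ_sum,
    Fintype.piFinset_univ]

theorem posSemidef_tensorFam [Finite d] {A : k → Matrix d d ℂ} (hA : ∀ a, (A a).PosSemidef) :
    (tensorFam A).PosSemidef := by
  classical
  have := Fintype.ofFinite d
  choose B hB using fun a => exists_eq_conjTranspose_mul_self (hA a)
  rw [funext hB, ← tensorFam_mul_tensorFam, ← conjTranspose_tensorFam]
  exact Matrix.posSemidef_conjTranspose_mul_self _

theorem IsDensity.tensorFam [DecidableEq k] [Fintype d] {A : k → Matrix d d ℂ}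
    (hA : ∀ a, IsDensity (A a)) :
    IsDensity (tensorFam A) :=
  ⟨posSemidef_tensorFam fun a => (hA a).1,
    (trace_tensorFam A).trans <| Finset.prod_eq_one fun a _ => (hA a).2⟩

end Tensor

section Mixture

variable {𝒮 : Type*}

theorem IsDensity.linearCombination {m : Type*} [Fintype m] {A : 𝒮 → Matrix m m ℂ}
    (hA : ∀ s, IsDensity (A s)) (w : StdSimplex ℝ 𝒮) :
    IsDensity (linearCombination ℝ A w.weights) := by
  rw [linearCombination_apply]
  refine ⟨Matrix.posSemidef_sum _ fun s _ => (hA s).1.smul (w.nonneg s), ?_⟩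
  have trace_eq : ((w.weights.sum fun s a => a • A s).trace : ℂ) =
      ((w.weights.sum fun _ a => a : ℝ) : ℂ) := by
    simp [Finsupp.sum, Matrix.trace_sum, (hA _).2]
  rw [trace_eq, w.total, Complex.ofReal_one]

theorem exists_le_linearCombination (w : StdSimplex ℝ 𝒮) (f : 𝒮 → ℝ) :
    ∃ s, f s ≤ linearCombination ℝ f w.weights := by
  set c := linearCombination ℝ f w.weights with hc
  have sum_eq : ∑ s ∈ w.weights.support, w.weights s * f s =
      ∑ s ∈ w.weights.support, w.weights s * c := by
    have total : ∑ s ∈ w.weights.support, w.weights s = 1 := w.total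
    rw [← Finset.sum_mul, total, one_mul, hc, linearCombination_apply]
    rfl
  obtain ⟨s, hs, hle⟩ := Finset.exists_le_of_sum_le w.support_weights_nonempty sum_eq.le
  have hpos : 0 < w.weights s := (w.nonneg s).lt_of_ne' (Finsupp.mem_support_iff.mp hs)
  exact ⟨s, le_of_mul_le_mul_left hle hpos⟩

variable {k : Type*} [Fintype k] [DecidableEq k]

/-- The joint distribution of independent letters `s a ∼ w a`. -/
@[simps weights]
def productDistribution (w : k → StdSimplex ℝ 𝒮) : StdSimplex ℝ (k → 𝒮) where
  weights := Finsupp.onFinset (Fintype.piFinset fun a => (w a).weights.support)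
    (fun s => ∏ a, (w a).weights (s a)) fun s hs => Fintype.mem_piFinset.mpr fun a =>
      Finsupp.mem_support_iff.mpr <| Finset.prod_ne_zero_iff.mp hs a (Finset.mem_univ a)
  nonneg _ := Finset.prod_nonneg fun a _ => (w a).nonneg _
  total := by
    rw [Finsupp.onFinset_sum _ fun _ => rfl, ← Finset.prod_univ_sum]
    exact Finset.prod_eq_one fun a _ => (w a).total

theorem tensorFam_linearCombination {d : Type*} (w : k → StdSimplex ℝ 𝒮)
    (A : k → 𝒮 → Matrix d d ℂ) :
    tensorFam (fun a => linearCombination ℝ (A a) (w a).weights) =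
      linearCombination ℝ (fun s => tensorFam fun a => A a (s a))
        (productDistribution w).weights := by
  rw [linearCombination_apply, weights_productDistribution,
    Finsupp.onFinset_sum _ fun s => zero_smul ℝ (tensorFam fun a => A a (s a))]
  ext i j
  simp only [tensorFam, linearCombination_apply, Finsupp.sum, Matrix.of_apply, Matrix.sum_apply,
    Matrix.smul_apply, Complex.real_smul, Finset.prod_univ_sum, Finset.prod_mul_distrib,
    Complex.ofReal_prod]

end Mixture

section Symmetrizability

variable {𝒳 𝒴 𝒮 m : Type*}

/-- The jammer's strategy `U` symmetrizes the channel `ρ` in its first input: averaging over a state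
drawn from `U`, the receiver cannot tell the input `x` under the strategy for `x'` from the input
`x'` under the strategy for `x`. -/
def IsSymmetrizing (U : 𝒳 → StdSimplex ℝ 𝒮) (ρ : 𝒳 → 𝒴 → 𝒮 → Matrix m m ℂ) : Prop :=
  ∀ x x' y, linearCombination ℝ (ρ x y) (U x').weights = linearCombination ℝ (ρ x' y) (U x).weights

/-- The state `ρ_{xⁿ,yⁿ,sⁿ}` received when the words `x` and `y` are sent over the memoryless
channel `ρ` in the channel state `s`. -/
def wordState {k : Type*} [Fintype k] (ρ : 𝒳 → 𝒴 → 𝒮 → Matrix m m ℂ)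
    (x : k → 𝒳) (y : k → 𝒴) (s : k → 𝒮) : Matrix (k → m) (k → m) ℂ :=
  tensorFam fun a => ρ (x a) (y a) (s a)

namespace IsSymmetrizing

theorem productDistribution_wordState {k : Type*} [Fintype k] [DecidableEq k]
    {U : 𝒳 → StdSimplex ℝ 𝒮} {ρ : 𝒳 → 𝒴 → 𝒮 → Matrix m m ℂ} (hU : IsSymmetrizing U ρ) :
    IsSymmetrizing (fun x : k → 𝒳 => productDistribution fun a => U (x a)) (wordState ρ) := by
  intro x x' y
  unfold wordState
  rw [← tensorFam_linearCombination, ← tensorFam_linearCombination]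
  exact congrArg tensorFam <| funext fun a => hU (x a) (x' a) (y a)

theorem comp {ι κ : Type*} {U : 𝒳 → StdSimplex ℝ 𝒮} {ρ : 𝒳 → 𝒴 → 𝒮 → Matrix m m ℂ}
    (hU : IsSymmetrizing U ρ) (f₁ : ι → 𝒳) (f₂ : κ → 𝒴) :
    IsSymmetrizing (fun i => U (f₁ i)) fun i b => ρ (f₁ i) (f₂ b) :=
  fun i j b => hU (f₁ i) (f₁ j) (f₂ b)

end IsSymmetrizing

end Symmetrizability

section OneShot

variable {ι κ 𝒮 m : Type*} [Fintype ι] [Fintype κ] [Fintype m] [DecidableEq m]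

theorem two_mul_sum_sum_le_of_add_swap_le_one {h : ι → ι → ℝ} (hdiag : ∀ i, h i i ≤ 1)
    (hoff : ∀ i j, i ≠ j → h i j + h j i ≤ 1) :
    2 * ∑ i, ∑ j, h i j ≤ Fintype.card ι * (Fintype.card ι + 1) := by
  classical
  have add_swap_le (i j : ι) : h i j + h j i ≤ 1 + if i = j then 1 else 0 := by
    split_ifs with hij
    · exact hij ▸ add_le_add (hdiag i) (hdiag i)
    · exact (hoff i j hij).trans_eq (add_zero 1).symm
  calc 2 * ∑ i, ∑ j, h i j
      = ∑ i, ∑ j, h i j + ∑ i, ∑ j, h j i := by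
        rw [two_mul, Finset.sum_comm (f := fun i j => h j i)]
    _ = ∑ i, ∑ j, (h i j + h j i) := by simp only [Finset.sum_add_distrib]
    _ ≤ ∑ i : ι, ∑ j : ι, (1 + if i = j then 1 else 0 : ℝ) := 
        Finset.sum_le_sum fun i _ => Finset.sum_le_sum fun j _ => add_swap_le i j
    _ = Fintype.card ι * (Fintype.card ι + 1) := by simp [Finset.sum_add_distrib, mul_add]

variable {σ : ι → κ → 𝒮 → Matrix m m ℂ} {U : ι → StdSimplex ℝ 𝒮} {D : ι × κ → Matrix m m ℂ}

theorem two_mul_sum_outcomeProb_linearCombination_le (hσ : ∀ i b s, IsDensity (σ i b s))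
    (hU : IsSymmetrizing U σ) (hD : IsPOVM D) :
    2 * ∑ j, ∑ p : ι × κ, outcomeProb (D p) (linearCombination ℝ (σ p.1 p.2) (U j).weights) ≤
      Fintype.card κ * (Fintype.card ι * (Fintype.card ι + 1)) := by
  let h (b : κ) (j i : ι) : ℝ :=
    outcomeProb (D (i, b)) (linearCombination ℝ (σ i b) (U j).weights)
  have density (b : κ) (j i : ι) : IsDensity (linearCombination ℝ (σ i b) (U j).weights) :=
    .linearCombination (hσ i b) (U j)
  have hdiag (b : κ) (i : ι) : h b i i ≤ 1 := hD.outcomeProb_le_one (density b i i) _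
  have hoff (b : κ) (j i : ι) (hji : j ≠ i) : h b j i + h b i j ≤ 1 := by
    simp only [h, hU j i b]
    exact hD.outcomeProb_add_le_one (density b j i) fun e => hji (congrArg Prod.fst e).symm
  calc 2 * ∑ j, ∑ p : ι × κ, outcomeProb (D p) (linearCombination ℝ (σ p.1 p.2) (U j).weights)
      = ∑ b, 2 * ∑ j, ∑ i, h b j i := by
        simp only [Fintype.sum_prod_type_right, ← Finset.mul_sum]
        rw [Finset.sum_comm]
    _ ≤ ∑ _b : κ, (Fintype.card ι * (Fintype.card ι + 1) : ℝ) :=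
        Finset.sum_le_sum fun b _ => two_mul_sum_sum_le_of_add_swap_le_one (hdiag b) (hoff b)
    _ = Fintype.card κ * (Fintype.card ι * (Fintype.card ι + 1)) := by simp

theorem IsSymmetrizing.exists_le_averageError [Nonempty ι] (hU : IsSymmetrizing U σ)
    (hσ : ∀ i b s, IsDensity (σ i b s)) (hD : IsPOVM D) :
    ∃ s, (1 - 1 / (Fintype.card ι : ℝ)) / 2 ≤ averageError D fun p => σ p.1 p.2 s := by
  set M : ℝ := (Fintype.card ι : ℝ) with hM
  have hM0 : 0 < M := Nat.cast_pos.mpr Fintype.card_pos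
  let success (s : 𝒮) : ℝ := ∑ p : ι × κ, outcomeProb (D p) (σ p.1 p.2 s)
  have mixed_success (w : StdSimplex ℝ 𝒮) : linearCombination ℝ success w.weights =
      ∑ p : ι × κ, outcomeProb (D p) (linearCombination ℝ (σ p.1 p.2) w.weights) := by
    simp only [linearCombination_apply, Finsupp.sum, map_sum, map_smul, success, Finset.smul_sum]
    exact Finset.sum_comm
  obtain ⟨j, -, hj⟩ : ∃ j ∈ Finset.univ, linearCombination ℝ success (U j).weights ≤
      (1 + 1 / M) / 2 * Fintype.card (ι × κ) := by
    refine Finset.exists_le_of_sum_le Finset.univ_nonempty ?_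
    have key := two_mul_sum_outcomeProb_linearCombination_le hσ hU hD
    simp only [mixed_success, Finset.sum_const, Finset.card_univ, nsmul_eq_mul, Fintype.card_prod,
      Nat.cast_mul, ← hM] at key ⊢
    field_simp
    linarith
  obtain ⟨s, hs⟩ := exists_le_linearCombination (U j) success
  have bound := one_sub_le_averageError (by positivity) (hs.trans hj)
  exact ⟨s, le_of_eq_of_le (by ring) bound⟩

end OneShot

section Code

variable {𝒳 𝒴 𝒮 ι κ k d : Type*} [Fintype ι] [Fintype κ] [Fintype k] [Fintype d]
  {ρ : 𝒳 → 𝒴 → 𝒮 → Matrix d d ℂ} {D : ι × κ → Matrix (k → d) (k → d) ℂ}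

theorem IsSymmetrizing.exists_le_averageError_wordState [DecidableEq k] [DecidableEq d] [Nonempty ι]
    {U : 𝒳 → StdSimplex ℝ 𝒮} (hU : IsSymmetrizing U ρ) (hρ : ∀ x y s, IsDensity (ρ x y s))
    (hD : IsPOVM D) (f₁ : ι → k → 𝒳) (f₂ : κ → k → 𝒴) :
    ∃ s : k → 𝒮, (1 - 1 / (Fintype.card ι : ℝ)) / 2 ≤
      averageError D fun p => wordState ρ (f₁ p.1) (f₂ p.2) s :=
  (hU.productDistribution_wordState.comp f₁ f₂).exists_le_averageError
    (fun _ _ _ => .tensorFam fun _ => hρ _ _ _) hD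

theorem averageError_wordState_le_iSup [DecidableEq k] (hρ : ∀ x y s, (ρ x y s).PosSemidef)
    (hD : ∀ p, (D p).PosSemidef) (f₁ : ι → k → 𝒳) (f₂ : κ → k → 𝒴) (s : k → 𝒮) :
    averageError D (fun p => wordState ρ (f₁ p.1) (f₂ p.2) s) ≤
      ⨆ s' : k → 𝒮, averageError D fun p => wordState ρ (f₁ p.1) (f₂ p.2) s' := by
  refine le_ciSup (f := fun s' => averageError D fun p => wordState ρ (f₁ p.1) (f₂ p.2) s') ?_ s
  exact ⟨1, Set.forall_mem_range.mpr fun _ =>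
    averageError_le_one hD fun _ => posSemidef_tensorFam fun _ => hρ _ _ _⟩

end Code

theorem statement12_general {𝒳 𝒴 𝒮 : Type*} {d n M₁ M₂ : ℕ}
    (ρ : 𝒳 → 𝒴 → 𝒮 → Matrix (Fin d) (Fin d) ℂ)
    (hρ : ∀ x y s, IsDensity (ρ x y s))
    (U : 𝒳 → 𝒮 →₀ ℝ)
    (hU0 : ∀ x s, 0 ≤ U x s)
    (hU1 : ∀ x, (U x).sum (fun _ a => a) = 1)
    (hsym : ∀ x x' y,
      (U x').sum (fun s w => w • ρ x y s) = (U x).sum (fun s w => w • ρ x' y s))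
    (hM₁ : 1 ≤ M₁)
    (f₁ : Fin M₁ → (Fin n → 𝒳)) (f₂ : Fin M₂ → (Fin n → 𝒴))
    (D : Fin M₁ → Fin M₂ → Matrix (Fin n → Fin d) (Fin n → Fin d) ℂ)
    (hD : ∀ m₁ m₂, (D m₁ m₂).PosSemidef)
    (hDsum : ∑ m₁, ∑ m₂, D m₁ m₂ = 1) :
    (1 - 1 / (M₁ : ℝ)) / 2 ≤
      ⨆ sv : Fin n → 𝒮,
        1 - (1 / ((M₁ : ℝ) * (M₂ : ℝ))) * ∑ m₁, ∑ m₂,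
          (Matrix.trace (D m₁ m₂ *
            tensorFam fun k => ρ (f₁ m₁ k) (f₂ m₂ k) (sv k))).re := by
  have : Nonempty (Fin M₁) := Fin.pos_iff_nonempty.mp hM₁
  have hPOVM : IsPOVM fun p : Fin M₁ × Fin M₂ => D p.1 p.2 :=
    ⟨fun p => hD p.1 p.2, by rw [Fintype.sum_prod_type, hDsum]⟩
  have hSymmetrizing : IsSymmetrizing (fun x => ⟨U x, hU0 x, hU1 x⟩) ρ := hsym
  obtain ⟨s, hs⟩ := hSymmetrizing.exists_le_averageError_wordState hρ hPOVM f₁ f₂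
  have hsup := hs.trans <|
    averageError_wordState_le_iSup (fun x y s => (hρ x y s).1) hPOVM.posSemidef f₁ f₂ s
  simpa only [averageError, outcomeProb_apply, wordState, Fintype.sum_prod_type, Fintype.card_prod,
    Fintype.card_fin, Nat.cast_mul] using hsup

/-- If the family is exactly `𝒳`-symmetrizable, then any deterministic
code with `M₁ ≥ 2` has worst-case average error at least `1/4`. -/
theorem statement12 {𝒳 𝒴 𝒮 : Type*} [Fintype 𝒳] [DecidableEq 𝒳] [Fintype 𝒴] [DecidableEq 𝒴]
    [Nonempty 𝒮] {d : ℕ}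
    (ρ : 𝒳 → 𝒴 → 𝒮 → Matrix (Fin d) (Fin d) ℂ)
    (hρ : ∀ x y s, IsDensity (ρ x y s))
    (U : 𝒳 → 𝒮 →₀ ℝ)
    (hU0 : ∀ x s, 0 ≤ U x s)
    (hU1 : ∀ x, (U x).sum (fun _ a => a) = 1)
    (hsym : ∀ x x' y,
      (U x').sum (fun s w => w • ρ x y s) = (U x).sum (fun s w => w • ρ x' y s))
    (n M₁ M₂ : ℕ) (hn : 1 ≤ n) (hM₁ : 2 ≤ M₁)
    (f₁ : Fin M₁ → (Fin n → 𝒳)) (f₂ : Fin M₂ → (Fin n → 𝒴))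
    (D : Fin M₁ → Fin M₂ → Matrix (Fin n → Fin d) (Fin n → Fin d) ℂ)
    (hD : ∀ m₁ m₂, (D m₁ m₂).PosSemidef)
    (hDsum : ∑ m₁, ∑ m₂, D m₁ m₂ = 1) :
    (1 : ℝ) / 4 ≤
      ⨆ sv : Fin n → 𝒮,
        1 - (1 / ((M₁ : ℝ) * (M₂ : ℝ))) * ∑ m₁, ∑ m₂,
          (Matrix.trace (D m₁ m₂ *
            tensorFam fun k => ρ (f₁ m₁ k) (f₂ m₂ k) (sv k))).re := by
  have one_div_le : 1 / (M₁ : ℝ) ≤ 1 / 2 := one_div_le_one_div_of_le two_pos (mod_cast hM₁)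
  linarith [statement12_general ρ hρ U hU0 hU1 hsym (by lia) f₁ f₂ D hD hDsum]
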